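/- arXiv:1610.06878 — 7 statements merged into one kernel-verified Lean document; each statement's English description precedes it below -/
import Mathlib

section
/- Let q be a prime power and m ≥ 1. Let S be the square matrix over ℚ with rows and columns indexed by the vectors of F^m (F the field with q elements), whose (i,j) entry is 1 if i is the zero vector or if ⟨i,j⟩ = 1, and 0 otherwise. Then S is invertible over ℚ, and its inverse is the matrix T given by: T_{0,0} = 1; T_{0,j} = −1/q^{m−1} for every j ≠ 0; T_{i,0} = 0 for every i ≠ 0; and for i ≠ 0 and j ≠ 0, T_{i,j} = 1/q^{m−1} if ⟨i,j⟩ = 1, T_{i,j} = −1/q^{m−1} if ⟨i,j⟩ = 0, and T_{i,j} = 0 otherwise. -/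
open scoped Classical

lemma aux_one {F : Type} [Field F] {m : ℕ} (j : Fin m → F) (hj : j ≠ 0) :
    ∃ v : Fin m → F, j ⬝ᵥ v = 1 := by
  obtain ⟨b, hb⟩ := Function.ne_iff.mp hj
  refine ⟨Pi.single b (j b)⁻¹, ?_⟩
  rw [dotProduct_single]
  exact mul_inv_cancel₀ hb

lemma aux_two {F : Type} [Field F] {m : ℕ} (i j : Fin m → F) (hi : i ≠ 0) :
    (∃ l : F, j = l • i) ∨ ∃ v : Fin m → F, i ⬝ᵥ v = 0 ∧ j ⬝ᵥ v = 1 := by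
  obtain ⟨a, ha⟩ := Function.ne_iff.mp hi
  have ha : i a ≠ 0 := ha
  by_cases h : j = (j a / i a) • i
  · exact Or.inl ⟨_, h⟩
  · right
    obtain ⟨b, hb⟩ := Function.ne_iff.mp h
    have hb : j b - j a / i a * i b ≠ 0 := sub_ne_zero.mpr hb
    refine ⟨(j b - j a / i a * i b)⁻¹ • (Pi.single b 1 - Pi.single a (i b / i a)), ?_, ?_⟩
    · rw [dotProduct_smul, dotProduct_sub, dotProduct_single, dotProduct_single,
        mul_div_cancel₀ _ ha]
      simp
    · rw [dotProduct_smul, dotProduct_sub, dotProduct_single, dotProduct_single, smul_eq_mul,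
        show j b * 1 - j a * (i b / i a) = j b - j a / i a * i b by ring]
      exact inv_mul_cancel₀ hb

lemma aux_card {F : Type} [Field F] [Fintype F] {m : ℕ} (hm : 1 ≤ m) (j : Fin m → F)
    (hj : j ≠ 0) (c : F) :
    (Finset.univ.filter (fun k : Fin m → F => j ⬝ᵥ k = c)).card = Fintype.card F ^ (m - 1) := by
  obtain ⟨v, hv⟩ := aux_one j hj
  have key : ∀ d : F, (Finset.univ.filter (fun k : Fin m → F => j ⬝ᵥ k = d)).card =
      (Finset.univ.filter (fun k : Fin m → F => j ⬝ᵥ k = c)).card := by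
    intro d
    refine Finset.card_equiv (Equiv.addRight ((c - d) • v)) ?_
    intro k
    simp only [Finset.mem_filter, Finset.mem_univ, true_and, Equiv.coe_addRight, dotProduct_add,
      dotProduct_smul, hv, smul_eq_mul, mul_one]
    constructor
    · intro h; rw [h]; ring
    · intro h; linear_combination h
  have h1 := Finset.card_eq_sum_card_fiberwise (s := (Finset.univ : Finset (Fin m → F)))
    (t := (Finset.univ : Finset F)) (f := fun k => j ⬝ᵥ k) (by intro x _; simp)
  rw [Finset.sum_congr rfl (fun d _ => key d)] at h1
  simp only [Finset.sum_const, Finset.card_univ, Fintype.card_fun, Fintype.card_fin,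
    smul_eq_mul] at h1
  obtain ⟨n, rfl⟩ : ∃ n, m = n + 1 := ⟨m - 1, by omega⟩
  rw [pow_succ, mul_comm] at h1
  exact (Nat.eq_of_mul_eq_mul_left Fintype.card_pos h1).symm

theorem statement2 (q m : ℕ) (hq : ∃ p k : ℕ, p.Prime ∧ 1 ≤ k ∧ q = p ^ k) (hm : 1 ≤ m)
    (F : Type) [Field F] [Fintype F] (hF : Fintype.card F = q)
    (S T : Matrix (Fin m → F) (Fin m → F) ℚ)
    (hS : ∀ i j, S i j = if i = 0 ∨ ∑ k, i k * j k = 1 then 1 else 0)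
    (hT00 : T 0 0 = 1)
    (hT0j : ∀ j, j ≠ 0 → T 0 j = -(1 / (q : ℚ) ^ (m - 1)))
    (hTi0 : ∀ i, i ≠ 0 → T i 0 = 0)
    (hTij : ∀ i j, i ≠ 0 → j ≠ 0 →
      T i j = if ∑ k, i k * j k = 1 then 1 / (q : ℚ) ^ (m - 1)
              else if ∑ k, i k * j k = 0 then -(1 / (q : ℚ) ^ (m - 1)) else 0) :
    IsUnit S ∧ S * T = 1 ∧ T * S = 1 := by
  have hS' : ∀ i j, S i j = if i = 0 ∨ i ⬝ᵥ j = 1 then 1 else 0 := hS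
  have hT' : ∀ k j, j ≠ 0 → T k j = (if j ⬝ᵥ k = 1 then 1 / (q : ℚ) ^ (m - 1) else 0) -
      (if j ⬝ᵥ k = 0 then 1 / (q : ℚ) ^ (m - 1) else 0) := by
    intro k j hj
    by_cases hk : k = 0
    · subst hk
      rw [hT0j j hj]
      simp
    · rw [hTij k j hk hj]
      change (if k ⬝ᵥ j = 1 then _ else if k ⬝ᵥ j = 0 then _ else _) = _
      rw [dotProduct_comm k j]
      by_cases h1 : j ⬝ᵥ k = 1
      · simp [h1]
      · by_cases h0 : j ⬝ᵥ k = 0 <;> simp [h1, h0]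
  have hq0 : (q : ℚ) ^ (m - 1) ≠ 0 := by
    rw [← hF]
    exact pow_ne_zero _ (by exact_mod_cast Fintype.card_ne_zero)
  have hST : S * T = 1 := by
    ext i j
    rw [Matrix.mul_apply, Matrix.one_apply]
    by_cases hj : j = 0
    · subst hj
      rw [Finset.sum_eq_single 0 (fun k _ hk => by rw [hTi0 k hk, mul_zero]) (by simp), hT00, hS']
      simp
    · have main : ∀ v : Fin m → F, i ⬝ᵥ v = 0 → j ⬝ᵥ v = 1 → ∑ k, S i k * T k j = 0 := by
        intro v hiv hjv
        simp only [hT' _ j hj, mul_sub, Finset.sum_sub_distrib]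
        rw [sub_eq_zero, ← Equiv.sum_comp (Equiv.addRight v)]
        refine Finset.sum_congr rfl fun k _ => ?_
        simp [hS', dotProduct_add, hiv, hjv]
      by_cases hi : i = 0
      · obtain ⟨v, hv⟩ := aux_one j hj
        rw [main v (by simp [hi]) hv, if_neg]
        rw [hi]; exact fun h => hj h.symm
      · rcases aux_two i j hi with ⟨l, hl⟩ | ⟨v, h1, h2⟩
        · have hl0 : l ≠ 0 := by rintro rfl; simp at hl; exact hj hl
          by_cases hl1 : l = 1
          · have hij : j = i := by rw [hl, hl1, one_smul]
            subst hij
            rw [if_pos rfl]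
            have : ∀ k, S j k * T k j = if j ⬝ᵥ k = 1 then 1 / (q : ℚ) ^ (m - 1) else 0 := by
              intro k
              rw [hS', hT' k j hj]
              by_cases h1 : j ⬝ᵥ k = 1 <;> simp [h1, hj]
            rw [Finset.sum_congr rfl (fun k _ => this k), ← Finset.sum_filter, Finset.sum_const,
              aux_card hm j hj, hF, nsmul_eq_mul]
            push_cast
            field_simp
          · rw [if_neg]
            · apply Finset.sum_eq_zero
              intro k _
              rw [hS', hT' k j hj, hl, smul_dotProduct]
              by_cases h1 : i ⬝ᵥ k = 1 <;> simp [h1, hi, hl0, hl1]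
            · intro h
              obtain ⟨a, ha⟩ := Function.ne_iff.mp hi
              have h2 := congrFun hl a
              rw [← h] at h2
              simp only [Pi.smul_apply, smul_eq_mul] at h2
              exact hl1 (mul_right_cancel₀ ha (by rw [one_mul]; exact h2.symm))
        · rw [main v h1 h2, if_neg]
          rintro rfl
          rw [h1] at h2
          exact zero_ne_one h2
  have hTS : T * S = 1 := mul_eq_one_comm.mp hST
  exact ⟨⟨⟨S, T, hST, hTS⟩, rfl⟩, hST, hTS⟩
end

section
/- Let p be a prime, r ≥ 1, q = p^r, let F be a field with q elements, let n ≥ 1, let K be a field with q^n elements containing F, and let f ∈ F[x]. Then (p−1)·#{(x,y) ∈ K × K : y^q − y = f(x)} − Σ_{α ∈ F, α ≠ 0} #{(x,y) ∈ K × K : y^p − y = α·f(x)} = (p − q)·q^n, an equality of integers. -/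
open scoped Classical

lemma aux_fixed (F K : Type) [Field F] [Fintype F] [Field K] [Algebra F K] (y : K)
    (hy : y ^ Fintype.card F - y = 0) : ∃ a : F, algebraMap F K a = y := by
  have hq : 1 < Fintype.card F := Fintype.one_lt_card
  have hne := FiniteField.X_pow_card_sub_X_ne_zero K hq
  have hsub : (Finset.univ.image (algebraMap F K)) ⊆
      (Polynomial.X ^ Fintype.card F - Polynomial.X : Polynomial K).roots.toFinset := by
    intro z hz
    obtain ⟨a, -, rfl⟩ := Finset.mem_image.1 hz
    rw [Multiset.mem_toFinset, Polynomial.mem_roots hne]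
    simp [← map_pow, FiniteField.pow_card]
  have hcard : (Polynomial.X ^ Fintype.card F - Polynomial.X : Polynomial K).roots.toFinset.card
      ≤ (Finset.univ.image (algebraMap F K)).card := by
    rw [Finset.card_image_of_injective _ (algebraMap F K).injective, Finset.card_univ]
    refine (Multiset.toFinset_card_le _).trans ((Polynomial.card_roots' _).trans ?_)
    rw [FiniteField.X_pow_card_sub_X_natDegree_eq K hq]
  have h := Finset.eq_of_subset_of_card_le hsub hcard
  have hm : y ∈ (Polynomial.X ^ Fintype.card F - Polynomial.X : Polynomial K).roots.toFinset := by
    rw [Multiset.mem_toFinset, Polynomial.mem_roots hne]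
    simpa using hy
  rw [← h] at hm
  obtain ⟨a, -, ha⟩ := Finset.mem_image.1 hm
  exact ⟨a, ha⟩

lemma aux_fiber (F K : Type) [Field F] [Fintype F] [Field K] [Fintype K] [Algebra F K] (c : K) :
    Nat.card {y : K // y ^ Fintype.card F - y = c} =
      if Algebra.trace F K c = 0 then Fintype.card F else 0 := by
  let φ : K →ₗ[F] K := (FiniteField.frobeniusAlgHom F K).toLinearMap - LinearMap.id
  have hφ : ∀ y, φ y = y ^ Fintype.card F - y := fun y => rfl
  have hker : LinearMap.ker φ = LinearMap.range (Algebra.linearMap F K) := by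
    ext y
    simp only [LinearMap.mem_ker, LinearMap.mem_range, Algebra.linearMap_apply, hφ]
    constructor
    · exact aux_fixed F K y
    · rintro ⟨a, rfl⟩
      simp [← map_pow, FiniteField.pow_card]
  have hle : LinearMap.range φ ≤ LinearMap.ker (Algebra.trace F K) := by
    rintro _ ⟨y, rfl⟩
    rw [LinearMap.mem_ker, hφ, map_sub, sub_eq_zero]
    exact Algebra.trace_eq_of_algEquiv (FiniteField.frobeniusAlgEquivOfAlgebraic F K) y
  have hrk1 : Module.finrank F (LinearMap.ker φ) = 1 := by
    rw [hker, LinearMap.finrank_range_of_inj (algebraMap F K).injective, Module.finrank_self]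
  have hrk2 : Module.finrank F (LinearMap.range (Algebra.trace F K)) = 1 := by
    rw [LinearMap.range_eq_top.2 (Algebra.trace_surjective F K), finrank_top, Module.finrank_self]
  have e1 := LinearMap.finrank_range_add_finrank_ker φ
  have e2 := LinearMap.finrank_range_add_finrank_ker (Algebra.trace F K)
  have heq : LinearMap.range φ = LinearMap.ker (Algebra.trace F K) :=
    Submodule.eq_of_le_of_finrank_eq hle (by omega)
  split_ifs with h
  · have : c ∈ LinearMap.range φ := by rw [heq]; exact h
    obtain ⟨y₀, hy₀⟩ := this
    symm
    refine (Nat.card_eq_fintype_card (α := F)).symm.trans ?_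
    refine Nat.card_congr (Equiv.ofBijective
      (fun a : F => (⟨y₀ + algebraMap F K a, ?_⟩ : {y : K // y ^ Fintype.card F - y = c})) ⟨?_, ?_⟩)
    · rw [← hφ, map_add, hy₀, hφ]
      simp [← map_pow, FiniteField.pow_card]
    · intro a b hab
      simpa using hab
    · rintro ⟨y, hy⟩
      obtain ⟨a, ha⟩ := aux_fixed F K (y - y₀) (by rw [← hφ, map_sub, hy₀, hφ, hy, sub_self])
      exact ⟨a, by simp [ha]⟩
  · have : IsEmpty {y : K // y ^ Fintype.card F - y = c} := by
      refine ⟨fun ⟨y, hy⟩ => h ?_⟩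
      have : c ∈ LinearMap.range φ := ⟨y, hy⟩
      rw [heq] at this
      exact this
    exact Nat.card_of_isEmpty

lemma aux_pairs (K : Type) [Fintype K] (P : K → K → Prop) :
    Nat.card {xy : K × K // P xy.1 xy.2} = ∑ x, Nat.card {y : K // P x y} := by
  rw [← Nat.card_sigma]
  exact Nat.card_congr
    { toFun := fun z => ⟨z.1.1, z.1.2, z.2⟩
      invFun := fun z => ⟨(z.1, z.2.1), z.2.2⟩
      left_inv := fun _ => rfl
      right_inv := fun _ => rfl }

lemma aux_ker (F K : Type) [Field F] [Fintype F] [Field K] [Fintype K] [Algebra F K] :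
    Fintype.card F * (Finset.univ.filter (fun a : K => Algebra.trace F K a = 0)).card
      = Fintype.card K := by
  have h := aux_pairs K (fun c y => y ^ Fintype.card F - y = c)
  simp_rw [aux_fiber] at h
  rw [Finset.sum_ite, Finset.sum_const_zero, add_zero, Finset.sum_const, smul_eq_mul,
    mul_comm] at h
  rw [← h, ← Nat.card_eq_fintype_card (α := K)]
  let e : {xy : K × K // xy.2 ^ Fintype.card F - xy.2 = xy.1} ≃ K :=
    { toFun := fun z => z.1.2
      invFun := fun y => ⟨(y ^ Fintype.card F - y, y), rfl⟩
      left_inv := by rintro ⟨⟨c, y⟩, h⟩; simpa using h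
      right_inv := fun _ => rfl }
  exact Nat.card_congr e

theorem statement3 (p r : ℕ) (hp : p.Prime) (hr : 1 ≤ r)
    (F : Type) [Field F] [Fintype F] (hF : Fintype.card F = p ^ r)
    (n : ℕ) (hn : 1 ≤ n)
    (K : Type) [Field K] [Fintype K] [Algebra F K]
    (hK : Fintype.card K = (p ^ r) ^ n)
    (f : Polynomial F) :
    ((p : ℤ) - 1) *
        (Nat.card {xy : K × K // xy.2 ^ (p ^ r) - xy.2 = Polynomial.aeval xy.1 f} : ℤ)
      - ∑ α ∈ Finset.univ.filter (fun α : F => α ≠ 0),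
          (Nat.card {xy : K × K //
              xy.2 ^ p - xy.2 = algebraMap F K α * Polynomial.aeval xy.1 f} : ℤ)
      = ((p : ℤ) - (p : ℤ) ^ r) * ((p : ℤ) ^ r) ^ n := by
  have : Fact p.Prime := ⟨hp⟩
  have : CharP F p := by
    refine (CharP.charP_iff_prime_eq_zero hp).2 ?_
    have h := FiniteField.cast_card_eq_zero F
    rw [hF, Nat.cast_pow] at h
    exact pow_eq_zero_iff (by omega) |>.1 h
  have : CharP K p := charP_of_injective_algebraMap (algebraMap F K).injective p
  let _ : Algebra (ZMod p) F := ZMod.algebra F p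
  let _ : Algebra (ZMod p) K := ZMod.algebra K p
  have : IsScalarTower (ZMod p) F K :=
    IsScalarTower.of_algebraMap_eq' (Subsingleton.elim _ _)
  have hcp : Fintype.card (ZMod p) = p := ZMod.card p
  rw [aux_pairs K (fun x y => y ^ (p ^ r) - y = Polynomial.aeval x f)]
  have h2 : ∀ α : F, (Nat.card {xy : K × K //
              xy.2 ^ p - xy.2 = algebraMap F K α * Polynomial.aeval xy.1 f} : ℤ) =
      ∑ x : K, (Nat.card {y : K // y ^ p - y = algebraMap F K α * Polynomial.aeval x f} : ℤ) := by
    intro α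
    rw [aux_pairs K (fun x y => y ^ p - y = algebraMap F K α * Polynomial.aeval x f)]
    push_cast
    rfl
  simp_rw [h2]
  rw [Finset.sum_comm]
  push_cast
  rw [Finset.mul_sum, ← Finset.sum_sub_distrib]
  have hx : ∀ c : K, ((p : ℤ) - 1) * (Nat.card {y : K // y ^ (p ^ r) - y = c} : ℤ)
      - ∑ α ∈ Finset.univ.filter (fun α : F => α ≠ 0),
          (Nat.card {y : K // y ^ p - y = algebraMap F K α * c} : ℤ) = (p : ℤ) - (p : ℤ) ^ r := by
    intro c
    have hq := aux_fiber F K c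
    rw [hF] at hq
    rw [hq]
    have hα : ∀ α : F, Nat.card {y : K // y ^ p - y = algebraMap F K α * c} =
        if Algebra.trace (ZMod p) F (α * Algebra.trace F K c) = 0 then p else 0 := by
      intro α
      have h := aux_fiber (ZMod p) K (algebraMap F K α * c)
      rw [hcp, ← Algebra.trace_trace (S := F), ← Algebra.smul_def, map_smul, smul_eq_mul] at h
      rw [← Algebra.smul_def]
      convert h
    simp_rw [hα]
    have hfull : ∑ α ∈ Finset.univ.filter (fun α : F => α ≠ 0),
        (((if Algebra.trace (ZMod p) F (α * Algebra.trace F K c) = 0 then p else 0 : ℕ)) : ℤ)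
        = ∑ α : F,
        (((if Algebra.trace (ZMod p) F (α * Algebra.trace F K c) = 0 then p else 0 : ℕ)) : ℤ)
          - p := by
      rw [eq_sub_iff_add_eq, Finset.filter_ne', ← Finset.sum_erase_add _ _ (Finset.mem_univ (0:F))]
      simp
    rw [hfull]
    by_cases ht : Algebra.trace F K c = 0
    · simp [ht, hF]
      ring
    · have hs : ∑ α : F,
        (((if Algebra.trace (ZMod p) F (α * Algebra.trace F K c) = 0 then p else 0 : ℕ)) : ℤ)
          = (p : ℤ) ^ r := by
        refine (Equiv.sum_comp (Equiv.mulRight₀ _ ht) (fun β : F =>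
          (((if Algebra.trace (ZMod p) F β = 0 then p else 0 : ℕ)) : ℤ))).trans ?_
        have h := aux_ker (ZMod p) F
        rw [hcp, hF] at h
        rw [← Nat.cast_sum, Finset.sum_ite, Finset.sum_const_zero, add_zero, Finset.sum_const,
          smul_eq_mul, mul_comm, ← Nat.cast_pow, ← h]
        congr!
      rw [hs, if_neg ht]
      simp
  simp_rw [hx]
  rw [Finset.sum_const, Finset.card_univ, hK, nsmul_eq_mul]
  push_cast
  ring
end

section
/- Let p be an odd prime, r ≥ 1, q = p^r, let F be a field with q elements, and let 1 ≤ l < p. For c in the prime field F_p ⊆ F, define θ_c : F^l → F^l by (θ_c(t_1,…,t_l))_k = Σ over tuples (ν_1,…,ν_k) of nonnegative integers with ν_1 + 2ν_2 + ⋯ + kν_k = k of c^(m)·∏_{i=1}^{k} t_i^{ν_i}/(ν_i!), where m = ν_1 + ⋯ + ν_k and c^(m) = c(c−1)⋯(c−m+1) is the falling factorial in F (the factorials ν_i! are invertible in F since ν_i ≤ k < p). Then for every n ≥ l coprime-or-not to p and every (t_1,…,t_l) ∈ F^l: if all t_k = 0 then n·I_q(n,0,…,0) = Σ_{d | n, p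 ∤ d} μ(d)·( F_q(n/d, 0,…,0) − ε_d·q^{n/(pd)} ), where ε_d = 1 if pd divides n and ε_d = 0 otherwise; and if (t_1,…,t_l) ≠ (0,…,0) then n·I_q(n,t_1,…,t_l) = Σ_{d | n, p ∤ d} μ(d)·F_q(n/d, θ_{c_d}(t_1,…,t_l)), where c_d ∈ F_p is the multiplicative inverse of the image of d in F_p. -/
open scoped Classical

/-- The `k`-th trace function for the extension of `F_q` of degree `n`:
`T_k(a) = Σ_S ∏_{i ∈ S} a^(q^i)`, sum over `k`-element subsets `S` of `{0,…,n-1}`.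
It is identically `0` when `k > n`. -/
noncomputable def traceFn (q n k : ℕ) {K : Type*} [CommRing K] (a : K) : K :=
  ∑ S ∈ Finset.powersetCard k (Finset.range n), ∏ i ∈ S, a ^ (q ^ i)

/-- The falling factorial `c^(m) = c(c−1)⋯(c−m+1)` in a field. -/
noncomputable def fallingFact {F : Type*} [Field F] (c : F) (m : ℕ) : F :=
  ∏ j ∈ Finset.range m, (c - (j : F))

/-- The map `θ_c : F^l → F^l` whose `k`-th component (for `k` running 1-based through
`1,…,l`) is `Σ_{ν_1 + 2ν_2 + ⋯ + kν_k = k} c^(ν_1+⋯+ν_k) · ∏_i t_i^{ν_i}/(ν_i!)`. -/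
noncomputable def theta {F : Type*} [Field F] {l : ℕ} (c : F) (t : Fin l → F) : Fin l → F :=
  fun k =>
    ∑ ν ∈ (Fintype.piFinset fun _ : Fin (k.1 + 1) => Finset.range (k.1 + 2)).filter
        (fun ν => ∑ i, (i.1 + 1) * ν i = k.1 + 1),
      fallingFact c (∑ i, ν i) *
        ∏ i : Fin (k.1 + 1),
          (t ⟨i.1, lt_of_le_of_lt (Nat.lt_succ_iff.mp i.2) k.2⟩ ^ ν i /
            (Nat.factorial (ν i) : F))

/-- `F_q(m, u)`: the number of elements of the degree-`m` extension `K m` of `F` whose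
first `l` trace functions take the prescribed values `u_1,…,u_l`. -/
noncomputable def Fcnt (q l : ℕ) (F : Type) [Field F] (K : ℕ → Type)
    [∀ m, Field (K m)] [∀ m, Algebra F (K m)] (m : ℕ) (u : Fin l → F) : ℕ :=
  Nat.card {a : K m // ∀ k : Fin l, traceFn q m (k.1 + 1) a = algebraMap F (K m) (u k)}

/-- `I_q(n, t)`: the number of monic irreducible polynomials of degree `n` over `F` whose
coefficient of `x^{n-k}` is `(−1)^k t_k` for `k = 1,…,l`. -/
noncomputable def Icnt (l : ℕ) (F : Type) [Field F] (n : ℕ) (t : Fin l → F) : ℕ :=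
  Nat.card {f : Polynomial F // f.Monic ∧ Irreducible f ∧ f.natDegree = n ∧
    ∀ k : Fin l, f.coeff (n - (k.1 + 1)) = (-1) ^ (k.1 + 1) * t k}

open Polynomial

lemma sum_moebius_divisors (D : ℕ) :
    ∑ d ∈ D.divisors, ArithmeticFunction.moebius d = if D = 1 then 1 else 0 := by
  have h := congrArg (fun f => f D) ArithmeticFunction.moebius_mul_coe_zeta
  simp only [ArithmeticFunction.coe_mul_zeta_apply,
    ArithmeticFunction.one_apply] at h
  exact h

lemma moebius_sieve (p n : ℕ) (hn : n ≠ 0) (M : ℕ → ℤ) (hM : ∀ D, p ∣ D → M D = 0) :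
    ∑ d ∈ n.divisors.filter (fun d => ¬ p ∣ d), ArithmeticFunction.moebius d *
      ∑ j ∈ (n / d).divisors, M (d * j) = M 1 := by
  have h1 : ∑ d ∈ n.divisors.filter (fun d => ¬ p ∣ d), ArithmeticFunction.moebius d *
      ∑ j ∈ (n / d).divisors, M (d * j) = ∑ d ∈ n.divisors, ArithmeticFunction.moebius d *
      ∑ j ∈ (n / d).divisors, M (d * j) := by
    refine Finset.sum_subset (Finset.filter_subset _ _) ?_
    intro d hd hd'
    have hpd : p ∣ d := by
      by_contra h
      exact hd' (Finset.mem_filter.2 ⟨hd, h⟩)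
    rw [Finset.sum_eq_zero, mul_zero]
    intro j _
    exact hM _ (hpd.mul_right j)
  rw [h1]
  have h2 : ∀ d ∈ n.divisors, ∑ j ∈ (n / d).divisors, M (d * j)
      = ∑ D ∈ n.divisors, if d ∣ D then M D else 0 := by
    intro d hd
    have hdn := Nat.dvd_of_mem_divisors hd
    have hd0 : 0 < d := Nat.pos_of_mem_divisors hd
    rw [← Finset.sum_filter]
    refine Finset.sum_bij' (fun j _ => d * j) (fun D _ => D / d) ?_ ?_ ?_ ?_ ?_
    · intro j hj
      have := Nat.dvd_of_mem_divisors hj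
      simp only [Finset.mem_filter, Nat.mem_divisors]
      exact ⟨⟨(Nat.dvd_div_iff_mul_dvd hdn).1 this, hn⟩, dvd_mul_right _ _⟩
    · intro D hD
      simp only [Finset.mem_filter, Nat.mem_divisors] at hD ⊢
      exact ⟨Nat.div_dvd_div hD.2 hD.1.1, (Nat.div_pos (Nat.le_of_dvd (Nat.pos_of_ne_zero hn) hdn) hd0).ne'⟩
    · intro j _
      exact Nat.mul_div_cancel_left _ hd0
    · intro D hD
      simp only [Finset.mem_filter] at hD
      exact Nat.mul_div_cancel' hD.2
    · intro j _; rfl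
  rw [Finset.sum_congr rfl fun d hd => by rw [h2 d hd, Finset.mul_sum], Finset.sum_comm]
  have h3 : ∀ D ∈ n.divisors, ∑ d ∈ n.divisors, ArithmeticFunction.moebius d * (if d ∣ D then M D else 0)
      = if D = 1 then M 1 else 0 := by
    intro D hD
    have hDn := Nat.dvd_of_mem_divisors hD
    have : ∑ d ∈ n.divisors, ArithmeticFunction.moebius d * (if d ∣ D then M D else 0)
      = (∑ d ∈ D.divisors, ArithmeticFunction.moebius d) * M D := by
      rw [Finset.sum_mul, ← Nat.divisors_filter_dvd_of_dvd hn hDn, Finset.sum_filter]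
      refine Finset.sum_congr rfl fun d _ => ?_
      split_ifs <;> simp
    rw [this, sum_moebius_divisors D]
    split_ifs with h
    · rw [h, one_mul]
    · simp
  rw [Finset.sum_congr rfl h3]
  simp [hn]

/-- The normalized reversed polynomial `f ↦ X^n f(-1/X)` up to sign. -/
noncomputable def revSgn {A : Type*} [CommRing A] (f : A[X]) : A[X] := f.reverse.comp (-X)

lemma revSgn_mul {A : Type*} [CommRing A] [IsDomain A] (f g : A[X]) :
    revSgn (f * g) = revSgn f * revSgn g := by
  simp [revSgn, reverse_mul_of_domain]

lemma revSgn_one {A : Type*} [CommRing A] [IsDomain A] : revSgn (1 : A[X]) = 1 := by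
  have : reverse (1 : A[X]) = 1 := by simpa using reverse_C (1 : A)
  simp [revSgn, this]

lemma revSgn_pow {A : Type*} [CommRing A] [IsDomain A] (f : A[X]) (n : ℕ) :
    revSgn (f ^ n) = revSgn f ^ n := by
  induction n with
  | zero => simp [revSgn_one]
  | succ n ih => rw [pow_succ, revSgn_mul, ih, pow_succ]

lemma revSgn_prod {A ι : Type*} [CommRing A] [IsDomain A] (s : Finset ι) (f : ι → A[X]) :
    revSgn (∏ i ∈ s, f i) = ∏ i ∈ s, revSgn (f i) := by
  classical
  induction s using Finset.induction_on with
  | empty => simp [revSgn_one]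
  | insert a s ha ih => rw [Finset.prod_insert ha, revSgn_mul, ih, Finset.prod_insert ha]

lemma revSgn_map {A B : Type*} [Field A] [Field B] (φ : A →+* B) (f : A[X]) :
    revSgn (f.map φ) = (revSgn f).map φ := by
  simp only [revSgn, reverse, Polynomial.map_comp, Polynomial.map_neg, map_X, natDegree_map]
  rw [reflect_map]

lemma revSgn_coeff {A : Type*} [CommRing A] (f : A[X]) (k : ℕ) (hk : k ≤ f.natDegree) :
    (revSgn f).coeff k = (-1) ^ k * f.coeff (f.natDegree - k) := by
  rw [revSgn, show (-X : A[X]) = C (-1) * X by simp, comp_C_mul_X_coeff, coeff_reverse, revAt_le hk,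
    mul_comm]

lemma revSgn_coeff_zero {A : Type*} [CommRing A] (f : A[X]) (hf : f.Monic) :
    (revSgn f).coeff 0 = 1 := by
  rw [revSgn_coeff f 0 (Nat.zero_le _)]
  simp [hf.leadingCoeff]

lemma revSgn_X_sub_C {A : Type*} [CommRing A] [IsDomain A] (b : A) :
    revSgn (X - C b) = 1 + C b * X := by
  have : reverse (X - C b) = 1 - C b * X := by
    ext k
    rw [coeff_reverse, natDegree_X_sub_C]
    rcases k with _ | _ | k
    · simp [revAt_le, coeff_X, coeff_C]
    · simp [revAt_le, coeff_X, coeff_one]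
    · rw [revAt_eq_self_of_lt (by omega)]
      simp [coeff_X, coeff_one]
  rw [revSgn, this]
  simp

lemma coeff_prod_one_add {A : Type*} [CommRing A] (m k : ℕ) (b : ℕ → A) :
    (∏ i ∈ Finset.range m, (1 + C (b i) * X)).coeff k
      = ∑ S ∈ Finset.powersetCard k (Finset.range m), ∏ i ∈ S, b i := by
  rw [Finset.prod_one_add, finsetSum_coeff, Finset.powersetCard_eq_filter, Finset.sum_filter]
  refine Finset.sum_congr rfl fun S _ => ?_
  rw [Finset.prod_mul_distrib, Finset.prod_const, ← map_prod, coeff_C_mul_X_pow]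
  simp [eq_comm]


/-- The first `l` nonconstant coefficients of `Q` are given by `t`. -/
def coeffCond {A : Type*} [CommRing A] {l : ℕ} (Q : A[X]) (t : Fin l → A) : Prop :=
  ∀ k : Fin l, Q.coeff (k.1 + 1) = t k

lemma pow_char_mod {A : Type*} [CommRing A] (p : ℕ) [Fact p.Prime] [CharP A p] (Q : A[X])
    (h : Q.coeff 0 = 1) : (X : A[X]) ^ p ∣ Q ^ p - 1 := by
  obtain ⟨R, hR⟩ : (X : A[X]) ∣ Q - 1 := by
    rw [X_dvd_iff]; simp [h]
  have : Q = 1 + X * R := by rw [← hR]; ring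
  rw [this, add_pow_char, one_pow, mul_pow]
  exact ⟨R ^ p, by ring⟩

lemma pow_mul_char_mod {A : Type*} [CommRing A] (p : ℕ) [Fact p.Prime] [CharP A p] (Q : A[X])
    (h : Q.coeff 0 = 1) (s : ℕ) : (X : A[X]) ^ p ∣ Q ^ (p * s) - 1 := by
  refine (pow_char_mod p Q h).trans ?_
  have := sub_dvd_pow_sub_pow (Q ^ p) 1 s
  rwa [one_pow, ← pow_mul] at this

lemma coeff_eq_of_dvd {A : Type*} [CommRing A] {Q R : A[X]} {n k : ℕ} (h : (X : A[X]) ^ n ∣ Q - R)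
    (hk : k < n) : Q.coeff k = R.coeff k := by
  rw [X_pow_dvd_iff] at h
  have := h k hk
  rwa [coeff_sub, sub_eq_zero] at this

lemma dvd_of_coeffCond {A : Type*} [CommRing A] {l : ℕ} {Q R : A[X]} {t : Fin l → A}
    (hQ : coeffCond Q t) (hR : coeffCond R t) (h0 : Q.coeff 0 = R.coeff 0) :
    (X : A[X]) ^ (l + 1) ∣ Q - R := by
  rw [X_pow_dvd_iff]
  intro d hd
  rw [coeff_sub, sub_eq_zero]
  rcases d with _ | d
  · exact h0
  · exact (hQ ⟨d, by omega⟩).trans (hR ⟨d, by omega⟩).symm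

lemma coeffCond_of_dvd {A : Type*} [CommRing A] {l : ℕ} {Q R : A[X]} {t : Fin l → A}
    (h : (X : A[X]) ^ (l + 1) ∣ Q - R) (hR : coeffCond R t) : coeffCond Q t := by
  intro k
  rw [coeff_eq_of_dvd h (by omega : k.1 + 1 < l + 1)]
  exact hR k

/-- The polynomial `1 + t_1 X + ⋯ + t_l X^l`. -/
noncomputable def genPoly {A : Type*} [CommRing A] {l : ℕ} (t : Fin l → A) : A[X] :=
  1 + ∑ i : Fin l, C (t i) * X ^ (i.1 + 1)

lemma genPoly_zero {A : Type*} [CommRing A] {l : ℕ} (t : Fin l → A) :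
    (genPoly t).coeff 0 = 1 := by
  simp [genPoly, finsetSum_coeff, coeff_X_pow]

lemma genPoly_cond {A : Type*} [CommRing A] {l : ℕ} (t : Fin l → A) :
    coeffCond (genPoly t) t := by
  intro k
  simp [genPoly, finsetSum_coeff, coeff_X_pow, coeff_one, ← Fin.ext_iff]

lemma fallingFact_nat {F : Type*} [Field F] (c m : ℕ) :
    fallingFact (c : F) m = (c.choose m : F) * (m.factorial : F) := by
  rw [← Nat.cast_mul, mul_comm, ← Nat.descFactorial_eq_factorial_mul_choose, fallingFact]
  induction m with
  | zero => simp
  | succ m ih =>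
    rw [Finset.prod_range_succ, ih, Nat.descFactorial_succ]
    rcases le_or_gt m c with h | h
    · push_cast [h]; ring
    · rw [Nat.descFactorial_of_lt h]; simp

lemma factorial_ne_zero_of_lt {F : Type*} [Field F] (p : ℕ) [hp : Fact p.Prime] [CharP F p] (m : ℕ)
    (h : m < p) : (m.factorial : F) ≠ 0 := by
  rw [Ne, CharP.cast_eq_zero_iff F p, hp.out.dvd_factorial]
  omega

lemma theta_nat_aux {F : Type*} [Field F] (p : ℕ) [Fact p.Prime] [CharP F p] (c k : ℕ)
    (hk : k + 1 < p) (t : Fin (k + 1) → F) :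
    (genPoly t ^ c).coeff (k + 1) =
    ∑ ν ∈ (Fintype.piFinset fun _ : Fin (k + 1) => Finset.range (k + 2)).filter
        (fun ν => ∑ i, (i.1 + 1) * ν i = k + 1),
      fallingFact (c : F) (∑ i, ν i) *
        ∏ i : Fin (k + 1), (t i ^ ν i / (Nat.factorial (ν i) : F)) := by
  have hS : ∀ m : ℕ, ((∑ i : Fin (k + 1), C (t i) * X ^ (i.1 + 1)) ^ m : F[X]).coeff (k + 1)
      = ∑ ν ∈ (Finset.piAntidiag Finset.univ m).filter
        (fun ν : Fin (k + 1) → ℕ => ∑ i, (i.1 + 1) * ν i = k + 1),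
        (m.factorial : F) * ∏ i : Fin (k + 1), (t i ^ ν i / (Nat.factorial (ν i) : F)) := by
    intro m
    rw [Finset.sum_pow_eq_sum_piAntidiag, finsetSum_coeff, Finset.sum_filter]
    refine Finset.sum_congr rfl fun ν hν => ?_
    have hprod : (∏ i : Fin (k + 1), (C (t i) * X ^ (i.1 + 1)) ^ ν i : F[X])
        = C (∏ i, t i ^ ν i) * X ^ (∑ i : Fin (k + 1), (i.1 + 1) * ν i) := by
      simp_rw [mul_pow, ← pow_mul]
      rw [Finset.prod_mul_distrib, Finset.prod_pow_eq_pow_sum]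
      simp
    rw [hprod, ← C_eq_natCast, coeff_C_mul, coeff_C_mul_X_pow]
    rw [Finset.mem_piAntidiag] at hν
    by_cases hw : ∑ i : Fin (k + 1), (i.1 + 1) * ν i = k + 1
    · rw [if_pos hw.symm, if_pos hw, Finset.prod_div_distrib]
      have hne : (∏ i : Fin (k + 1), (Nat.factorial (ν i) : F)) ≠ 0 := by
        rw [Finset.prod_ne_zero_iff]
        intro i _
        apply factorial_ne_zero_of_lt p
        have : (i.1 + 1) * ν i ≤ k + 1 := by
          refine le_trans ?_ hw.le
          exact Finset.single_le_sum (f := fun i : Fin (k + 1) => (i.1 + 1) * ν i)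
            (fun _ _ => Nat.zero_le _) (Finset.mem_univ i)
        nlinarith
      have hm := Nat.multinomial_spec (Finset.univ : Finset (Fin (k + 1))) ν
      rw [hν.1] at hm
      rw [← hm]
      push_cast
      field_simp
    · rw [if_neg hw, if_neg (fun h => hw h.symm), mul_zero]
  have hL : (genPoly t ^ c).coeff (k + 1) = ∑ m ∈ Finset.range (c + k + 2), (c.choose m : F) *
      ((∑ i : Fin (k + 1), C (t i) * X ^ (i.1 + 1)) ^ m : F[X]).coeff (k + 1) := by
    rw [genPoly, add_comm, add_pow, finsetSum_coeff]
    rw [← Finset.sum_subset (Finset.range_mono (show c + 1 ≤ c + k + 2 by omega))]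
    · refine Finset.sum_congr rfl fun m _ => ?_
      rw [one_pow, mul_one, ← C_eq_natCast, coeff_mul_C, mul_comm]
    · intro m _ hm
      rw [Finset.mem_range] at hm
      rw [Nat.choose_eq_zero_of_lt (by omega)]
      simp
  rw [hL]
  rw [← Finset.sum_fiberwise_of_maps_to (s := Finset.filter _ _) (t := Finset.range (c + k + 2))
    (g := fun ν : Fin (k + 1) → ℕ => ∑ i, ν i)]
  · refine Finset.sum_congr rfl fun m _ => ?_
    rw [hS, Finset.mul_sum]
    refine Finset.sum_congr ?_ ?_
    · ext ν
      simp only [Finset.mem_filter, Finset.mem_piAntidiag, Fintype.mem_piFinset, Finset.mem_range,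
        Finset.mem_univ, implies_true, and_true]
      constructor
      · rintro ⟨h1, h2⟩
        refine ⟨⟨fun i => ?_, h2⟩, h1⟩
        have : (i.1 + 1) * ν i ≤ k + 1 := by
          refine le_trans ?_ h2.le
          exact Finset.single_le_sum (f := fun i : Fin (k + 1) => (i.1 + 1) * ν i)
            (fun _ _ => Nat.zero_le _) (Finset.mem_univ i)
        nlinarith
      · rintro ⟨⟨_, h2⟩, h1⟩
        exact ⟨h1, h2⟩
    · intro ν hν
      simp only [Finset.mem_filter] at hν
      rw [hν.2, fallingFact_nat]
      ring
  · intro ν hν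
    simp only [Finset.mem_filter] at hν
    have : ∑ i, ν i ≤ ∑ i : Fin (k + 1), (i.1 + 1) * ν i :=
      Finset.sum_le_sum fun i _ => by nlinarith [Nat.zero_le (ν i), Nat.zero_le i.1]
    rw [Finset.mem_range]
    omega

lemma theta_nat {F : Type*} [Field F] (p : ℕ) [Fact p.Prime] [CharP F p] {l : ℕ} (hl : l < p)
    (c : ℕ) (t : Fin l → F) : coeffCond (genPoly t ^ c) (theta (c : F) t) := by
  intro k
  set t' : Fin (k.1 + 1) → F := fun i => t ⟨i.1, lt_of_le_of_lt (Nat.lt_succ_iff.mp i.2) k.2⟩ with ht'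
  have h1 : (X : F[X]) ^ (k.1 + 1 + 1) ∣ genPoly t - genPoly t' := by
    apply dvd_of_coeffCond (t := t')
    · intro i
      exact genPoly_cond t ⟨i.1, lt_of_le_of_lt (Nat.lt_succ_iff.mp i.2) k.2⟩
    · exact genPoly_cond t'
    · rw [genPoly_zero, genPoly_zero]
  rw [coeff_eq_of_dvd (h1.trans (sub_dvd_pow_sub_pow _ _ c)) (by omega),
    theta_nat_aux p c k.1 (by omega)]
  rfl

lemma coeffCond_theta_iff {F : Type*} [Field F] (p : ℕ) [Fact p.Prime] [CharP F p] {l : ℕ}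
    (hl : l < p) (t : Fin l → F) (d : ℕ) (hd : ¬ p ∣ d) (j : ℕ) (Q : F[X]) (hQ : Q.coeff 0 = 1) :
    coeffCond (Q ^ j) (theta ((((d : ZMod p)⁻¹).val : ℕ) : F) t) ↔ coeffCond (Q ^ (d * j)) t := by
  set c := ((d : ZMod p)⁻¹).val with hc
  have hcoeff : ∀ (R : F[X]) (m : ℕ), R.coeff 0 = 1 → (R ^ m).coeff 0 = 1 := by
    intro R m h
    rw [coeff_zero_eq_eval_zero, eval_pow, ← coeff_zero_eq_eval_zero, h, one_pow]
  have hd0 : (d : ZMod p) ≠ 0 := by rwa [Ne, ZMod.natCast_eq_zero_iff]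
  obtain ⟨s, hs⟩ : ∃ s, d * c = 1 + p * s := by
    have h1 : ((d * c : ℕ) : ZMod p) = ((1 : ℕ) : ZMod p) := by
      push_cast
      rw [hc, ZMod.natCast_val, ZMod.cast_id, mul_inv_cancel₀ hd0]
    rw [ZMod.natCast_eq_natCast_iff] at h1
    have hpos : 1 ≤ d * c := by
      rcases Nat.eq_zero_or_pos (d * c) with h | h
      · rw [h] at h1
        have := (Nat.modEq_zero_iff_dvd.1 h1.symm)
        exact absurd (Nat.dvd_one.1 this) (Fact.out : p.Prime).ne_one
      · exact h
    obtain ⟨s, hs⟩ := (Nat.modEq_iff_dvd' hpos).1 h1.symm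
    exact ⟨s, by omega⟩
  have key : ∀ R : F[X], R.coeff 0 = 1 → (X : F[X]) ^ (l + 1) ∣ R ^ (d * c) - R := by
    intro R hR
    refine (pow_dvd_pow X (show l + 1 ≤ p by omega)).trans ?_
    have := (pow_mul_char_mod p R hR s).mul_left R
    rw [hs, pow_add, pow_one]
    convert this using 1
    ring
  have hU0 := genPoly_zero t
  have hth := theta_nat p hl c t
  constructor
  · intro h
    have h1 := dvd_of_coeffCond h hth (by rw [hcoeff Q j hQ, hcoeff _ c hU0])
    have h2 := h1.trans (sub_dvd_pow_sub_pow _ _ d)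
    rw [← pow_mul, ← pow_mul, mul_comm j, mul_comm c] at h2
    have h3 := dvd_add h2 (key _ hU0)
    rw [sub_add_sub_cancel] at h3
    exact coeffCond_of_dvd h3 (genPoly_cond t)
  · intro h
    have h1 := dvd_of_coeffCond h (genPoly_cond t) (by rw [hcoeff Q _ hQ, hU0])
    have h2 := h1.trans (sub_dvd_pow_sub_pow _ _ c)
    have h4 := key _ (hcoeff Q j hQ)
    rw [← pow_mul, show d * j * c = j * (d * c) by ring] at h2
    rw [← pow_mul] at h4
    have h3 := dvd_sub h2 h4
    rw [sub_sub_sub_cancel_left] at h3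
    exact coeffCond_of_dvd h3 hth

lemma coeffCond_char_iff {F : Type*} [Field F] (p : ℕ) [Fact p.Prime] [CharP F p] {l : ℕ}
    (hl : l < p) (t : Fin l → F) (D : ℕ) (hD : p ∣ D) (Q : F[X]) (hQ : Q.coeff 0 = 1) :
    coeffCond (Q ^ D) t ↔ t = 0 := by
  obtain ⟨s, rfl⟩ := hD
  have h := pow_mul_char_mod p Q hQ s
  have hz : ∀ k : Fin l, (Q ^ (p * s)).coeff (k.1 + 1) = 0 := by
    intro k
    rw [coeff_eq_of_dvd h (by omega), coeff_one]
    simp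
  constructor
  · intro hc
    ext k
    rw [← hc k, hz k]; rfl
  · rintro rfl k
    exact hz k


section counting

variable {F K : Type*} [Field F] [Fintype F] [Field K] [Fintype K] [Algebra F K]

lemma pow_eq_self_iff (a : K) (j : ℕ) :
    a ^ (Fintype.card F) ^ j = a ↔ (minpoly F a).natDegree ∣ j := by
  have hint : IsIntegral F a := Algebra.IsIntegral.isIntegral a
  rw [(minpoly.irreducible hint).natDegree_dvd_iff_dvd_X_pow_card_pow_sub_X, minpoly.dvd_iff,
    Nat.card_eq_fintype_card]
  simp [sub_eq_zero]

lemma minpoly_prod (a : K) :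
    ∏ i ∈ Finset.range (minpoly F a).natDegree, (X - C (a ^ (Fintype.card F) ^ i))
      = (minpoly F a).map (algebraMap F K) := by
  have hint : IsIntegral F a := Algebra.IsIntegral.isIntegral a
  set e := (minpoly F a).natDegree with he
  have hmon : ((minpoly F a).map (algebraMap F K)).Monic := (minpoly.monic hint).map _
  have hinj : Set.InjOn (fun i => a ^ (Fintype.card F) ^ i) (Finset.range e : Set ℕ) := by
    have aux : ∀ i j, i < j → j < e → a ^ (Fintype.card F) ^ i ≠ a ^ (Fintype.card F) ^ j := by
      intro i j hij hj h
      have hinjF : Function.Injective (fun x : K => x ^ (Fintype.card F) ^ i) := by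
        have h1 := ((FiniteField.frobeniusAlgHom F K).toRingHom.injective).iterate i
        have h2 : (⇑(FiniteField.frobeniusAlgHom F K).toRingHom)^[i]
            = (fun x : K => x ^ (Fintype.card F) ^ i) := by
          have : ⇑(FiniteField.frobeniusAlgHom F K).toRingHom = (· ^ Fintype.card F) := rfl
          rw [this, pow_iterate]
        rwa [h2] at h1
      have h3 : a ^ (Fintype.card F) ^ (j - i) = a := by
        apply hinjF
        simp only
        rw [← pow_mul, ← pow_add, Nat.sub_add_cancel hij.le]
        exact h.symm
      rw [pow_eq_self_iff] at h3
      have := Nat.le_of_dvd (by omega) h3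
      omega
    intro i hi j hj h
    simp only [Finset.coe_range, Set.mem_Iio] at hi hj
    rcases lt_trichotomy i j with hij | hij | hij
    · exact absurd h (aux i j hij hj)
    · exact hij
    · exact absurd h.symm (aux j i hij hi)
  have hroot : ∀ i, aeval (a ^ (Fintype.card F) ^ i) (minpoly F a) = 0 := by
    intro i
    induction i with
    | zero => simp
    | succ i ih =>
      have : a ^ (Fintype.card F) ^ (i + 1)
          = FiniteField.frobeniusAlgHom F K (a ^ (Fintype.card F) ^ i) := by
        rw [FiniteField.coe_frobeniusAlgHom]
        simp only
        rw [← pow_mul, pow_succ]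
      rw [this, aeval_algHom_apply, ih, map_zero]
  have hdvd : ∏ i ∈ Finset.range e, (X - C (a ^ (Fintype.card F) ^ i))
      ∣ (minpoly F a).map (algebraMap F K) := by
    rw [← Finset.prod_image (f := fun b => X - C b) hinj]
    have := (Multiset.prod_X_sub_C_dvd_iff_le_roots hmon.ne_zero
      ((Finset.range e).image fun i => a ^ (Fintype.card F) ^ i).val).2 ?_
    · exact this
    · rw [Multiset.le_iff_subset (Finset.nodup _)]
      intro b hb
      rw [Finset.mem_val, Finset.mem_image] at hb
      obtain ⟨i, _, rfl⟩ := hb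
      rw [mem_roots hmon.ne_zero, IsRoot.def, eval_map_algebraMap]
      exact hroot i
  refine (eq_of_monic_of_dvd_of_natDegree_le (monic_prod_X_sub_C _ _) hmon hdvd ?_).symm
  rw [natDegree_map, natDegree_finsetProd_X_sub_C_eq_card]
  simp [he]

lemma minpoly_prod_pow (a : K) (s : ℕ) :
    ∏ i ∈ Finset.range ((minpoly F a).natDegree * s), (X - C (a ^ (Fintype.card F) ^ i))
      = ((minpoly F a).map (algebraMap F K)) ^ s := by
  induction s with
  | zero => simp
  | succ s ih =>
    rw [mul_add, mul_one, Finset.prod_range_add, ih, pow_succ, ← minpoly_prod a]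
    congr 1
    refine Finset.prod_congr rfl fun i _ => ?_
    rw [pow_add, pow_mul, (pow_eq_self_iff a _).2 (dvd_mul_right _ _)]

lemma traceFn_eq (a : K) (s k : ℕ) :
    traceFn (Fintype.card F) ((minpoly F a).natDegree * s) k a
      = algebraMap F K ((revSgn (minpoly F a) ^ s).coeff k) := by
  rw [traceFn, ← coeff_prod_one_add]
  simp_rw [← revSgn_X_sub_C]
  rw [← revSgn_prod, minpoly_prod_pow, revSgn_pow, revSgn_map, ← Polynomial.map_pow, coeff_map]

/-- Monic irreducible polynomials of degree `e` with property `P`, counted. -/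
noncomputable def irrCnt (F : Type*) [Field F] (e : ℕ) (P : F[X] → Prop) : ℕ :=
  Nat.card {f : F[X] // f.Monic ∧ Irreducible f ∧ f.natDegree = e ∧ P f}

lemma natDegree_minpoly_dvd (m : ℕ) (hK : Fintype.card K = Fintype.card F ^ m) (a : K) :
    (minpoly F a).natDegree ∣ m := by
  rw [← pow_eq_self_iff, ← hK, FiniteField.pow_card]

lemma card_roots (m : ℕ) (hK : Fintype.card K = Fintype.card F ^ m) (f : F[X])
    (hf : f.Monic) (hi : Irreducible f) (hd : f.natDegree ∣ m) :
    Nat.card {a : K // minpoly F a = f} = f.natDegree := by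
  have hdvd := hi.natDegree_dvd_iff_dvd_X_pow_card_pow_sub_X.1 hd
  rw [Nat.card_eq_fintype_card, ← hK] at hdvd
  have hsplit : (f.map (algebraMap F K)).Splits := by
    refine Splits.of_dvd (FiniteField.isSplittingField_sub K F).splits ?_
      (Polynomial.map_dvd _ hdvd)
    refine Polynomial.map_ne_zero (FiniteField.X_pow_card_sub_X_ne_zero F ?_)
    exact Fintype.one_lt_card
  have hsep : f.Separable := PerfectField.separable_of_irreducible hi
  rw [← card_rootSet_eq_natDegree hsep hsplit, ← Nat.card_eq_fintype_card]
  refine Nat.card_congr (Equiv.subtypeEquivRight fun a => ?_)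
  rw [mem_rootSet_of_ne hf.ne_zero]
  constructor
  · rintro rfl
    exact minpoly.aeval _ _
  · intro h
    exact (minpoly.eq_of_irreducible_of_monic hi h hf).symm

lemma card_by_degree (m e : ℕ) (hm : m ≠ 0) (hK : Fintype.card K = Fintype.card F ^ m)
    (he : e ∣ m) (P : F[X] → Prop) :
    Nat.card {a : K // (minpoly F a).natDegree = e ∧ P (minpoly F a)} = e * irrCnt F e P := by
  let B := {f : F[X] // f.Monic ∧ Irreducible f ∧ f.natDegree = e ∧ P f}
  let g : {a : K // (minpoly F a).natDegree = e ∧ P (minpoly F a)} → B := fun a =>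
    ⟨minpoly F a.1, minpoly.monic (Algebra.IsIntegral.isIntegral a.1),
      minpoly.irreducible (Algebra.IsIntegral.isIntegral a.1), a.2.1, a.2.2⟩
  have hfib : ∀ b : B, Nat.card {x // g x = b} = e := by
    rintro ⟨f, h1, h2, h3, h4⟩
    refine Eq.trans ?_ ((card_roots (K := K) m hK f h1 h2 (h3 ▸ he)).trans h3)
    refine Nat.card_congr ⟨fun x => ⟨x.1.1, congrArg Subtype.val x.2⟩,
      fun a => ⟨⟨a.1, by rw [a.2]; exact ⟨h3, h4⟩⟩, Subtype.ext a.2⟩, fun x => rfl, fun a => rfl⟩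
  have he0 : e ≠ 0 := by rintro rfl; exact hm (zero_dvd_iff.1 he)
  have hsurj : Function.Surjective g := by
    intro b
    have : Nat.card {x // g x = b} ≠ 0 := by rw [hfib]; exact he0
    obtain ⟨x⟩ := (Nat.card_ne_zero.1 this).1
    exact ⟨x.1, x.2⟩
  have hfin : Finite B := Finite.of_surjective g hsurj
  have : Fintype B := Fintype.ofFinite B
  rw [← Nat.card_congr (Equiv.sigmaFiberEquiv g), Nat.card_sigma, Finset.sum_congr rfl
    (fun b _ => hfib b), Finset.sum_const, Finset.card_univ, smul_eq_mul, mul_comm,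
    ← Nat.card_eq_fintype_card]
  rfl

lemma card_all (m : ℕ) (hm : m ≠ 0) (hK : Fintype.card K = Fintype.card F ^ m)
    (P : K → Prop) (N : ℕ → F[X] → Prop)
    (hP : ∀ a : K, ∀ j, (minpoly F a).natDegree * j = m → (P a ↔ N j (minpoly F a))) :
    Nat.card {a : K // P a} = ∑ j ∈ m.divisors, (m / j) * irrCnt F (m / j) (N j) := by
  rw [Nat.card_eq_fintype_card, Fintype.card_subtype,
    Finset.card_eq_sum_card_fiberwise (t := m.divisors)
      (f := fun a : K => m / (minpoly F a).natDegree)]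
  · refine Finset.sum_congr rfl fun j hj => ?_
    have hjm := Nat.dvd_of_mem_divisors hj
    have hj0 : 0 < j := Nat.pos_of_mem_divisors hj
    rw [← card_by_degree (K := K) m (m / j) hm hK (Nat.div_dvd_of_dvd hjm), Nat.card_eq_fintype_card,
      Fintype.card_subtype, Finset.filter_filter]
    congr 1
    refine Finset.filter_congr fun a _ => ?_
    have hd := natDegree_minpoly_dvd m hK a
    have hd0 : 0 < (minpoly F a).natDegree := minpoly.natDegree_pos (Algebra.IsIntegral.isIntegral a)
    have h1 : m / (minpoly F a).natDegree = j ↔ (minpoly F a).natDegree * j = m := by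
      rw [Nat.div_eq_iff_eq_mul_right hd0 hd, eq_comm]
    have h2 : (minpoly F a).natDegree = m / j ↔ (minpoly F a).natDegree * j = m := by
      rw [eq_comm, Nat.div_eq_iff_eq_mul_left hj0 hjm, eq_comm]
    rw [h1, h2]
    constructor
    · rintro ⟨h3, h4⟩
      exact ⟨h4, (hP a j h4).1 h3⟩
    · rintro ⟨h3, h4⟩
      exact ⟨(hP a j h3).2 h4, h3⟩
  · intro a _
    simp only [Finset.mem_coe, Nat.mem_divisors]
    exact ⟨Nat.div_dvd_of_dvd (natDegree_minpoly_dvd m hK a), hm⟩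

lemma irrCnt_congr {F : Type*} [Field F] (e : ℕ) (P P' : F[X] → Prop) (h : ∀ f : F[X], f.Monic → (P f ↔ P' f)) :
    irrCnt F e P = irrCnt F e P' := by
  refine Nat.card_congr (Equiv.subtypeEquivRight fun f => ?_)
  constructor
  · rintro ⟨h1, h2, h3, h4⟩
    exact ⟨h1, h2, h3, (h f h1).1 h4⟩
  · rintro ⟨h1, h2, h3, h4⟩
    exact ⟨h1, h2, h3, (h f h1).2 h4⟩

end counting

lemma Fcnt_eq (l : ℕ) (F : Type) [Field F] [Fintype F]
    (K : ℕ → Type) [∀ m, Field (K m)] [∀ m, Fintype (K m)] [∀ m, Algebra F (K m)]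
    (hK : ∀ m, 1 ≤ m → Fintype.card (K m) = Fintype.card F ^ m) (m : ℕ) (hm : m ≠ 0)
    (u : Fin l → F) :
    Fcnt (Fintype.card F) l F K m u = ∑ j ∈ m.divisors,
      (m / j) * irrCnt F (m / j) (fun f => coeffCond (revSgn f ^ j) u) := by
  refine card_all m hm (hK m (Nat.pos_of_ne_zero hm)) _ _ ?_
  intro a j h
  refine forall_congr' fun k => ?_
  have h1 := traceFn_eq (F := F) a j (k.1 + 1)
  rw [h] at h1
  rw [h1]
  exact (algebraMap F (K m)).injective.eq_iff

lemma Icnt_eq (l : ℕ) (F : Type) [Field F] (n : ℕ) (hn : l ≤ n) (t : Fin l → F) :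
    Icnt l F n t = irrCnt F n (fun f => coeffCond (revSgn f ^ 1) t) := by
  refine Nat.card_congr (Equiv.subtypeEquivRight fun f => ?_)
  refine and_congr_right fun _ => and_congr_right fun _ => and_congr_right fun h3 => ?_
  refine forall_congr' fun k => ?_
  rw [pow_one, revSgn_coeff f _ (by omega), h3]
  rcases neg_one_pow_eq_or F (k.1 + 1) with h | h <;> rw [h]
  · simp
  · constructor
    · intro h; rw [h]; ring
    · intro h; rw [← h]; ring

lemma theta_zero {F : Type*} [Field F] (p : ℕ) [Fact p.Prime] [CharP F p] {l : ℕ} (hl : l < p)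
    (c : ℕ) : theta (c : F) (0 : Fin l → F) = 0 := by
  ext k
  rw [← theta_nat p hl c (0 : Fin l → F) k]
  simp [genPoly, coeff_one]

theorem statement4 (p r q l : ℕ) (hp : p.Prime) (hodd : Odd p) (hr : 1 ≤ r) (hq : q = p ^ r)
    (hl : 1 ≤ l) (hlp : l < p)
    (F : Type) [Field F] [Fintype F] (hF : Fintype.card F = q)
    (K : ℕ → Type) [∀ m, Field (K m)] [∀ m, Fintype (K m)] [∀ m, Algebra F (K m)]
    (hK : ∀ m, 1 ≤ m → Fintype.card (K m) = q ^ m)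
    (n : ℕ) (hn : l ≤ n) (t : Fin l → F) :
    (t = 0 →
      (n : ℤ) * (Icnt l F n t : ℤ)
        = ∑ d ∈ n.divisors.filter (fun d => ¬ p ∣ d),
            (ArithmeticFunction.moebius d) *
              ((Fcnt q l F K (n / d) 0 : ℤ) -
                if p * d ∣ n then (q : ℤ) ^ (n / (p * d)) else 0)) ∧
    (t ≠ 0 →
      (n : ℤ) * (Icnt l F n t : ℤ)
        = ∑ d ∈ n.divisors.filter (fun d => ¬ p ∣ d),
            (ArithmeticFunction.moebius d) *
              (Fcnt q l F K (n / d) (theta ((((d : ZMod p)⁻¹).val : ℕ) : F) t) : ℤ)) := by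
  have hpf : Fact p.Prime := ⟨hp⟩
  have hch : CharP F p := by
    refine charP_of_card_eq_prime_pow (f := r) ?_
    rw [hF, hq]
  clear hq
  subst hF
  have hn0 : n ≠ 0 := by omega
  set N : ℕ → ℤ := fun D => ((n / D : ℕ) : ℤ) *
    (irrCnt F (n / D) (fun f => coeffCond (revSgn f ^ D) t) : ℤ) with hN
  have hI : (n : ℤ) * (Icnt l F n t : ℤ) = N 1 := by
    rw [hN, Icnt_eq l F n hn t]
    simp
  have hnd : ∀ d, d ∣ n → n / d ≠ 0 := fun d hd =>
    (Nat.div_pos (Nat.le_of_dvd (Nat.pos_of_ne_zero hn0) hd)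
      (Nat.pos_of_dvd_of_pos hd (Nat.pos_of_ne_zero hn0))).ne'
  have hFc : ∀ d, d ∣ n → ¬ p ∣ d →
      (Fcnt (Fintype.card F) l F K (n / d) (theta ((((d : ZMod p)⁻¹).val : ℕ) : F) t) : ℤ)
        = ∑ j ∈ (n / d).divisors, N (d * j) := by
    intro d hdn hpd
    rw [Fcnt_eq l F K hK (n / d) (hnd d hdn)]
    rw [Nat.cast_sum]
    refine Finset.sum_congr rfl fun j _ => ?_
    rw [hN]
    simp only
    rw [Nat.cast_mul, Nat.div_div_eq_div_mul, irrCnt_congr (n / (d * j)) _ _ fun f hf =>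
      coeffCond_theta_iff p hlp t d hpd j _ (revSgn_coeff_zero f hf)]
  have hp1 : ¬ p ∣ 1 := fun h => hp.ne_one (Nat.dvd_one.1 h)
  constructor
  · intro ht
    set M : ℕ → ℤ := fun D => if p ∣ D then 0 else N D with hM
    have hM1 : N 1 = M 1 := by simp only [hM, if_neg hp1]
    rw [hI, hM1, ← moebius_sieve p n hn0 M (fun D hD => by simp only [hM, if_pos hD])]
    refine Finset.sum_congr rfl fun d hd => ?_
    rw [Finset.mem_filter] at hd
    have hdn := Nat.dvd_of_mem_divisors hd.1
    have hd0 := Nat.pos_of_mem_divisors hd.1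
    have hF0 := hFc d hdn hd.2
    rw [ht, theta_zero p hlp] at hF0
    rw [hF0]
    congr 1
    rw [eq_sub_iff_add_eq, ← Finset.sum_filter_add_sum_filter_not (n / d).divisors (fun j => p ∣ j)
      (fun j => N (d * j)), add_comm]
    congr 1
    · split_ifs with hpd
      · have hm0 := hnd _ hpd
        have hc := card_all (F := F) (K := K (n / (p * d))) (n / (p * d)) hm0
          (hK _ (Nat.pos_of_ne_zero hm0)) (fun _ => True) (fun _ _ => True) (fun _ _ _ => Iff.rfl)
        have hc2 : Nat.card {a : K (n / (p * d)) // True} = Fintype.card F ^ (n / (p * d)) := by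
          rw [← hK _ (Nat.pos_of_ne_zero hm0), ← Nat.card_eq_fintype_card]
          exact Nat.card_congr (Equiv.subtypeUnivEquiv fun _ => trivial)
        rw [← Nat.cast_pow, ← hc2, hc]
        rw [Nat.cast_sum]
        have hpnd : p ∣ n / d := by
          rw [Nat.dvd_div_iff_mul_dvd hdn, mul_comm]; exact hpd
        have hdiv : n / (p * d) = n / d / p := by
          rw [Nat.div_div_eq_div_mul, mul_comm]
        refine Finset.sum_bij' (fun j _ => p * j) (fun j _ => j / p) ?_ ?_ ?_ ?_ ?_
        · intro j hj
          have hj' := Nat.dvd_of_mem_divisors hj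
          rw [hdiv] at hj'
          simp only [Finset.mem_filter, Nat.mem_divisors]
          exact ⟨⟨(Nat.dvd_div_iff_mul_dvd hpnd).1 hj', hnd d hdn⟩, dvd_mul_right _ _⟩
        · intro j hj
          simp only [Finset.mem_filter, Nat.mem_divisors] at hj ⊢
          refine ⟨?_, hm0⟩
          rw [hdiv]
          exact Nat.div_dvd_div hj.2 hj.1.1
        · intro j _
          exact Nat.mul_div_cancel_left _ hp.pos
        · intro j hj
          simp only [Finset.mem_filter] at hj
          exact Nat.mul_div_cancel' hj.2
        · intro j _
          simp only [hN]
          have h1 : n / (p * d) / j = n / (d * (p * j)) := by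
            rw [Nat.div_div_eq_div_mul]; congr 1; ring
          rw [Nat.cast_mul, h1, irrCnt_congr (n / (d * (p * j))) (fun _ => True)
            (fun f => coeffCond (revSgn f ^ (d * (p * j))) t) fun f hf => by
            rw [coeffCond_char_iff p hlp t (d * (p * j)) ((dvd_mul_right p j).mul_left d) _
              (revSgn_coeff_zero f hf)]
            simp [ht]]
      · symm
        apply Finset.sum_eq_zero
        intro j hj
        simp only [Finset.mem_filter, Nat.mem_divisors] at hj
        refine absurd ?_ hpd
        rw [mul_comm]
        exact (Nat.dvd_div_iff_mul_dvd hdn).1 (hj.2.trans hj.1.1)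
    · rw [Finset.sum_filter]
      refine Finset.sum_congr rfl fun j _ => ?_
      simp only [hM, hp.dvd_mul, hd.2, false_or]
      split_ifs <;> simp_all
  · intro ht
    rw [hI, ← moebius_sieve p n hn0 N]
    · refine Finset.sum_congr rfl fun d hd => ?_
      rw [Finset.mem_filter] at hd
      rw [hFc d (Nat.dvd_of_mem_divisors hd.1) hd.2]
    · intro D hD
      have : irrCnt F (n / D) (fun f => coeffCond (revSgn f ^ D) t) = 0 := by
        rw [irrCnt_congr (n / D) _ (fun _ => False) fun f hf => by
          rw [coeffCond_char_iff p hlp t D hD _ (revSgn_coeff_zero f hf)]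
          simp [ht]]
        simp [irrCnt]
      simp only [hN, this]
      simp
end

section
/- For every prime p and every integer j ≥ 1, the sequence n ↦ (binomial coefficient C(n,j) reduced modulo p), defined for n ≥ 0, is periodic, and its least positive period is p^(1 + ⌊log_p j⌋). -/
theorem choose_add_prime_pow (p : ℕ) [Fact p.Prime] (a n j : ℕ) :
    (((n + p ^ a).choose j : ℕ) : ZMod p) =
      (n.choose j : ZMod p) + if p ^ a ≤ j then ((n.choose (j - p ^ a) : ℕ) : ZMod p) else 0 := by
  have h : ((1 + Polynomial.X : Polynomial (ZMod p)) ^ (n + p ^ a)) =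
      (1 + Polynomial.X) ^ n + (1 + Polynomial.X) ^ n * Polynomial.X ^ (p ^ a) := by
    rw [pow_add, add_pow_char_pow]; ring
  have h2 := congrArg (fun f => Polynomial.coeff f j) h
  simpa [Polynomial.coeff_one_add_X_pow, Polynomial.coeff_mul_X_pow'] using h2

theorem statement5 (p j : ℕ) (hp : p.Prime) (hj : 1 ≤ j) :
    Function.Periodic (fun n : ℕ => ((n.choose j : ZMod p))) (p ^ (1 + Nat.log p j)) ∧
    ∀ T : ℕ, 0 < T → Function.Periodic (fun n : ℕ => ((n.choose j : ZMod p))) T →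
      p ^ (1 + Nat.log p j) ≤ T := by
  have : Fact p.Prime := ⟨hp⟩
  have hlt : j < p ^ (1 + Nat.log p j) := by
    rw [add_comm]; exact Nat.lt_pow_succ_log_self hp.one_lt j
  have hle : p ^ Nat.log p j ≤ j := Nat.pow_log_le_self p (by omega)
  have hP : Function.Periodic (fun n : ℕ => ((n.choose j : ZMod p))) (p ^ (1 + Nat.log p j)) := by
    intro n
    simp only
    rw [choose_add_prime_pow, if_neg (by omega), add_zero]
  refine ⟨hP, fun T hT hper => ?_⟩
  by_contra hcon
  push Not at hcon
  have hgle : Nat.gcd T (p ^ (1 + Nat.log p j)) ≤ T := Nat.gcd_le_left _ hT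
  obtain ⟨m, -, hm⟩ := Nat.exists_mul_mod_eq_gcd (k := p ^ (1 + Nat.log p j)) (n := T)
    (by omega)
  obtain ⟨b, hb, hbg⟩ := (Nat.dvd_prime_pow hp).1 (Nat.gcd_dvd_right T (p ^ (1 + Nat.log p j)))
  have hble : b ≤ Nat.log p j := by
    by_contra hc
    have : b = 1 + Nat.log p j := by omega
    rw [this] at hbg
    omega
  have hd : Function.Periodic (fun n : ℕ => ((n.choose j : ZMod p))) (p ^ b) := by
    intro n
    have h1 := hP.nat_mul (T * m / p ^ (1 + Nat.log p j)) (n + p ^ b)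
    have h2 := hper.nat_mul m n
    refine h1.symm.trans (Eq.trans ?_ h2)
    have key : n + p ^ b + T * m / p ^ (1 + Nat.log p j) * p ^ (1 + Nat.log p j) = n + m * T := by
      have := Nat.div_add_mod (T * m) (p ^ (1 + Nat.log p j))
      rw [hm, hbg] at this
      linarith
    simp only [Nat.cast_id]
    rw [key]
  have hq := hd.nat_mul (p ^ (Nat.log p j - b)) (j - p ^ Nat.log p j)
  simp only [Nat.cast_id] at hq
  rw [← pow_add, Nat.sub_add_cancel hble, choose_add_prime_pow, if_pos hle] at hq
  simp at hq
end

section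
/- Let m ≥ 1 and index rows and columns by the vectors of F_2^m, where F_2 = ZMod 2. Let S be the matrix over ℚ with S_{i,j} = 1 if ⟨i,j⟩ = 0 and S_{i,j} = 0 if ⟨i,j⟩ = 1; let H be the matrix with H_{i,j} = (−1)^{⟨i,j⟩} (so H_{i,j} = 1 if ⟨i,j⟩ = 0 and −1 if ⟨i,j⟩ = 1); and let A be the matrix whose only nonzero entry is A_{0,0} = 1, where 0 is the zero vector. Then S is invertible over ℚ and S^{−1} = (1/2^{m−1})·H − A. -/
def chi (x : ZMod 2) : ℚ := if x = 0 then 1 else -1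

theorem chi_add (x y : ZMod 2) : chi (x + y) = chi x * chi y := by
  have h : ∀ x : ZMod 2, x = 0 ∨ x = 1 := by decide
  have h2 : (1 + 1 : ZMod 2) = 0 := by decide
  rcases h x with rfl | rfl <;> rcases h y with rfl | rfl <;> simp [chi, h2]

theorem chi_sum (m : ℕ) (i : Fin m → ZMod 2) :
    ∑ k : Fin m → ZMod 2, chi (∑ l, i l * k l) = if i = 0 then 2 ^ m else 0 := by
  split_ifs with h
  · subst h
    simp [chi, ZMod.card]
  · obtain ⟨a, ha⟩ : ∃ a, i a ≠ 0 := by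
      by_contra hc
      push Not at hc
      exact h (funext hc)
    have h1 : i a = 1 := by
      have h : ∀ x : ZMod 2, x ≠ 0 → x = 1 := by decide
      exact h _ ha
    have key : ∑ k : Fin m → ZMod 2, chi (∑ l, i l * k l)
        = ∑ k : Fin m → ZMod 2, - chi (∑ l, i l * k l) := by
      rw [← Equiv.sum_comp (Equiv.addRight (Pi.single a (1 : ZMod 2)))]
      refine Finset.sum_congr rfl fun k _ => ?_
      have : ∑ l, i l * (k + Pi.single a (1 : ZMod 2) : Fin m → ZMod 2) l = (∑ l, i l * k l) + 1 := by
        simp [mul_add, Finset.sum_add_distrib, Pi.single_apply, h1]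
      simp only [Equiv.coe_addRight]
      rw [this, chi_add]
      simp [chi]
    rw [Finset.sum_neg_distrib] at key
    linarith

theorem statement7 (m : ℕ) (hm : 1 ≤ m)
    (S H A : Matrix (Fin m → ZMod 2) (Fin m → ZMod 2) ℚ)
    (hS : ∀ i j, S i j = if ∑ k, i k * j k = 0 then 1 else 0)
    (hH : ∀ i j, H i j = if ∑ k, i k * j k = 0 then 1 else -1)
    (hA : ∀ i j, A i j = if i = 0 ∧ j = 0 then 1 else 0) :
    IsUnit S ∧ S⁻¹ = (1 / 2 ^ (m - 1) : ℚ) • H - A := by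
  have hmul : S * ((1 / 2 ^ (m - 1) : ℚ) • H - A) = 1 := by
    ext i j
    have hSA : (S * A) i j = if j = 0 then 1 else 0 := by
      rw [Matrix.mul_apply, Finset.sum_eq_single 0]
      · simp [hS, hA]
      · intro b _ hb
        simp [hA, hb]
      · simp
    have hij : i + j = 0 ↔ i = j := by
      have h : ∀ x y : ZMod 2, x + y = 0 ↔ x = y := by decide
      simp [funext_iff, h]
    have hSH : (S * H) i j =
        ((if j = 0 then 2 ^ m else 0) + (if i = j then 2 ^ m else 0)) / 2 := by
      have e := chi_sum m (i + j)
      simp only [hij] at e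
      rw [Matrix.mul_apply, ← e, ← chi_sum m j, ← Finset.sum_add_distrib, Finset.sum_div]
      refine Finset.sum_congr rfl fun k _ => ?_
      have e1 : ∑ l, (i + j) l * k l = ∑ l, i l * k l + ∑ l, j l * k l := by
        simp [add_mul, Finset.sum_add_distrib]
      have e2 : H k j = chi (∑ l, j l * k l) := by
        rw [hH]; simp only [chi, mul_comm]
      have e3 : S i k = (1 + chi (∑ l, i l * k l)) / 2 := by
        rw [hS]; unfold chi; split_ifs <;> norm_num
      rw [e1, chi_add, e2, e3]; ring
    rw [mul_sub, Matrix.mul_smul, Matrix.sub_apply, Matrix.smul_apply, hSA, hSH,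
      Matrix.one_apply]
    obtain ⟨n, rfl⟩ : ∃ n, m = n + 1 := ⟨m - 1, by omega⟩
    have hp : (2 : ℚ) ^ n ≠ 0 := by positivity
    simp only [Nat.add_sub_cancel, smul_eq_mul, pow_succ]
    split_ifs <;> field_simp <;> norm_num
  exact ⟨IsUnit.of_mul_eq_one _ hmul, Matrix.inv_eq_right_inv hmul⟩
end

section
/- Work in the polynomial ring ℤ[α_1,…,α_n,β_1,…,β_n]. For every n ≥ 1 the following identities hold: (1) T_1(α−β) = T_1(α) − T_1(β); (2) if n ≥ 2, T_2(α−β) = T_2(α) + T_2(β) − T_1(α)·T_1(β) + T_1(αβ); (3) if n ≥ 3, T_3(α−β) = T_3(α) − T_3(β) + T_1(α)·T_2(β) − T_1(β)·T_2(α) + T_1(α)·T_1(αβ) − T_1(β)·T_1(αβ) + T_1(αβ²) − T_1(α²β). -/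
/-- The `l`-th elementary symmetric polynomial of the values `v 0, …, v (n-1)`. -/
noncomputable def esym {R : Type*} [CommRing R] {n : ℕ} (l : ℕ) (v : Fin n → R) : R :=
  ∑ S ∈ Finset.powersetCard l (Finset.univ : Finset (Fin n)), ∏ i ∈ S, v i

/-- The variables `α_1, …, α_n` of `ℤ[α_1,…,α_n,β_1,…,β_n]`. -/
noncomputable def av (n : ℕ) : Fin n → MvPolynomial (Fin n ⊕ Fin n) ℤ :=
  fun i => MvPolynomial.X (Sum.inl i)

/-- The variables `β_1, …, β_n` of `ℤ[α_1,…,α_n,β_1,…,β_n]`. -/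
noncomputable def bv (n : ℕ) : Fin n → MvPolynomial (Fin n ⊕ Fin n) ℤ :=
  fun i => MvPolynomial.X (Sum.inr i)

/-- Elementary symmetric sum over an arbitrary finset, for induction. -/
noncomputable def esF {R ι : Type*} [CommRing R] (l : ℕ) (s : Finset ι) (v : ι → R) : R :=
  ∑ S ∈ Finset.powersetCard l s, ∏ i ∈ S, v i

theorem esF_zero {R ι : Type*} [CommRing R] (s : Finset ι) (v : ι → R) : esF 0 s v = 1 := by
  simp [esF]

theorem esF_empty {R ι : Type*} [CommRing R] (l : ℕ) (v : ι → R) :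
    esF (l + 1) (∅ : Finset ι) v = 0 := by
  have h : Finset.powersetCard (l + 1) (∅ : Finset ι) = ∅ :=
    Finset.powersetCard_eq_empty.2 (by simp)
  simp [esF, h]

theorem esF_insert {R ι : Type*} [CommRing R] [DecidableEq ι] (l : ℕ) (s : Finset ι) (a : ι)
    (ha : a ∉ s) (v : ι → R) :
    esF (l + 1) (insert a s) v = esF (l + 1) s v + v a * esF l s v := by
  have hmem : ∀ S ∈ Finset.powersetCard l s, a ∉ S := fun S hS h =>
    ha ((Finset.mem_powersetCard.1 hS).1 h)
  unfold esF
  rw [Finset.powersetCard_succ_insert ha, Finset.sum_union, Finset.sum_image, Finset.mul_sum]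
  · congr 1
    exact Finset.sum_congr rfl fun S hS => Finset.prod_insert (hmem S hS)
  · intro S hS T hT h
    rw [← Finset.erase_insert (hmem S hS), ← Finset.erase_insert (hmem T hT), h]
  · rw [Finset.disjoint_left]
    intro S hS hS'
    obtain ⟨T, _, rfl⟩ := Finset.mem_image.1 hS'
    exact ha ((Finset.mem_powersetCard.1 hS).1 (Finset.mem_insert_self a T))

theorem esF_sub {R ι : Type*} [CommRing R] [DecidableEq ι] (s : Finset ι) (a b : ι → R) :
    (esF 1 s (fun i => a i - b i) = esF 1 s a - esF 1 s b) ∧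
    (esF 2 s (fun i => a i - b i)
        = esF 2 s a + esF 2 s b - esF 1 s a * esF 1 s b + esF 1 s (fun i => a i * b i)) ∧
    (esF 3 s (fun i => a i - b i)
        = esF 3 s a - esF 3 s b + esF 1 s a * esF 2 s b - esF 1 s b * esF 2 s a
          + esF 1 s a * esF 1 s (fun i => a i * b i)
          - esF 1 s b * esF 1 s (fun i => a i * b i)
          + esF 1 s (fun i => a i * b i ^ 2) - esF 1 s (fun i => a i ^ 2 * b i)) := by
  induction s using Finset.induction_on with
  | empty =>
    have h1 := fun v : ι → R => esF_empty 0 v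
    have h2 := fun v : ι → R => esF_empty 1 v
    have h3 := fun v : ι → R => esF_empty 2 v
    norm_num at h1 h2 h3
    simp [h1, h2, h3]
  | insert x s hx ih =>
    obtain ⟨i1, i2, i3⟩ := ih
    have h1 : ∀ v : ι → R, esF 1 (insert x s) v = esF 1 s v + v x := fun v => by
      simpa [esF_zero] using esF_insert 0 s x hx v
    have h2 : ∀ v : ι → R, esF 2 (insert x s) v = esF 2 s v + v x * esF 1 s v :=
      fun v => esF_insert 1 s x hx v
    have h3 : ∀ v : ι → R, esF 3 (insert x s) v = esF 3 s v + v x * esF 2 s v :=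
      fun v => esF_insert 2 s x hx v
    simp only [h1, h2, h3, i1, i2, i3]
    refine ⟨?_, ?_, ?_⟩ <;> ring

theorem statement8 (n : ℕ) (hn : 1 ≤ n) :
    (esym 1 (fun i => av n i - bv n i) = esym 1 (av n) - esym 1 (bv n)) ∧
    (2 ≤ n →
      esym 2 (fun i => av n i - bv n i)
        = esym 2 (av n) + esym 2 (bv n) - esym 1 (av n) * esym 1 (bv n)
          + esym 1 (fun i => av n i * bv n i)) ∧
    (3 ≤ n →
      esym 3 (fun i => av n i - bv n i)
        = esym 3 (av n) - esym 3 (bv n) + esym 1 (av n) * esym 2 (bv n)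
          - esym 1 (bv n) * esym 2 (av n)
          + esym 1 (av n) * esym 1 (fun i => av n i * bv n i)
          - esym 1 (bv n) * esym 1 (fun i => av n i * bv n i)
          + esym 1 (fun i => av n i * bv n i ^ 2)
          - esym 1 (fun i => av n i ^ 2 * bv n i)) := by
  obtain ⟨h1, h2, h3⟩ := esF_sub Finset.univ (av n) (bv n)
  exact ⟨h1, fun _ => h2, fun _ => h3⟩
end

section
/- Work in the polynomial ring ℤ[α_1,…,α_n,β_1,…,β_n] with n ≥ 4. Then T_4(α−β) = T_4(α) + T_4(β) − T_1(α)·T_3(β) − T_1(β)·T_3(α) + T_2(α)·T_2(β) − T_1(α)·T_1(β)·T_1(αβ) + T_1(αβ)·T_2(α) + T_1(αβ)·T_2(β) − T_1(α)·T_1(α²β) + T_1(α)·T_1(αβ²) + T_1(β)·T_1(α²β) − T_1(β)·T_1(αβ²) + T_1(α³β) − T_1(α²β²) + T_1(αβ³) + T_2(αβ). -/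
/-- Elementary symmetric sums over an arbitrary finset. -/
noncomputable def esymOn {R ι : Type*} [CommRing R] (l : ℕ) (s : Finset ι) (v : ι → R) : R :=
  ∑ S ∈ Finset.powersetCard l s, ∏ i ∈ S, v i

theorem esymOn_insert {R ι : Type*} [CommRing R] [DecidableEq ι] (l : ℕ) (s : Finset ι)
    (v : ι → R) (x : ι) (hx : x ∉ s) :
    esymOn (l + 1) (insert x s) v = esymOn (l + 1) s v + v x * esymOn l s v := by
  unfold esymOn
  rw [Finset.powersetCard_succ_insert hx, Finset.sum_union, Finset.sum_image, Finset.mul_sum]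
  · congr 1
    refine Finset.sum_congr rfl fun S hS => ?_
    rw [Finset.prod_insert]
    exact fun h => hx ((Finset.mem_powersetCard.1 hS).1 h)
  · intro S hS T hT h
    have h1 : x ∉ S := fun h => hx ((Finset.mem_powersetCard.1 hS).1 h)
    have h2 : x ∉ T := fun h => hx ((Finset.mem_powersetCard.1 hT).1 h)
    rw [← Finset.erase_insert h1, ← Finset.erase_insert h2]
    exact congrArg (fun U => Finset.erase U x) h
  · rw [Finset.disjoint_left]
    intro S hS hT
    obtain ⟨T, _, rfl⟩ := Finset.mem_image.1 hT
    exact hx ((Finset.mem_powersetCard.1 hS).1 (Finset.mem_insert_self x T))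

theorem esymOn_zero {R ι : Type*} [CommRing R] (s : Finset ι) (v : ι → R) :
    esymOn 0 s v = 1 := by
  simp [esymOn]

theorem esymOn_empty {R ι : Type*} [CommRing R] (l : ℕ) (v : ι → R) :
    esymOn (l + 1) ∅ v = 0 := by
  unfold esymOn
  rw [Finset.powersetCard_eq_empty.2 (by simp)]
  simp

theorem esymOn_all {R ι : Type*} [CommRing R] (a b : ι → R) (s : Finset ι) :
    esymOn 1 s (fun i => a i - b i) = esymOn 1 s a - esymOn 1 s b ∧
    esymOn 2 s (fun i => a i - b i) = esymOn 2 s a + esymOn 2 s b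
      - esymOn 1 s a * esymOn 1 s b + esymOn 1 s (fun i => a i * b i) ∧
    esymOn 3 s (fun i => a i - b i) = esymOn 3 s a - esymOn 3 s b
      - esymOn 2 s a * esymOn 1 s b + esymOn 1 s a * esymOn 2 s b
      + esymOn 1 s (fun i => a i * b i) * (esymOn 1 s a - esymOn 1 s b)
      - esymOn 1 s (fun i => a i ^ 2 * b i) + esymOn 1 s (fun i => a i * b i ^ 2) ∧
    esymOn 4 s (fun i => a i - b i)
      = esymOn 4 s a + esymOn 4 s b
        - esymOn 1 s a * esymOn 3 s b - esymOn 1 s b * esymOn 3 s a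
        + esymOn 2 s a * esymOn 2 s b
        - esymOn 1 s a * esymOn 1 s b * esymOn 1 s (fun i => a i * b i)
        + esymOn 1 s (fun i => a i * b i) * esymOn 2 s a
        + esymOn 1 s (fun i => a i * b i) * esymOn 2 s b
        - esymOn 1 s a * esymOn 1 s (fun i => a i ^ 2 * b i)
        + esymOn 1 s a * esymOn 1 s (fun i => a i * b i ^ 2)
        + esymOn 1 s b * esymOn 1 s (fun i => a i ^ 2 * b i)
        - esymOn 1 s b * esymOn 1 s (fun i => a i * b i ^ 2)
        + esymOn 1 s (fun i => a i ^ 3 * b i)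
        - esymOn 1 s (fun i => a i ^ 2 * b i ^ 2)
        + esymOn 1 s (fun i => a i * b i ^ 3)
        + esymOn 2 s (fun i => a i * b i) := by
  classical
  induction s using Finset.induction_on with
  | empty =>
    simp only [esymOn_empty _ _, esymOn_empty 0, esymOn_empty 1, esymOn_empty 2, esymOn_empty 3]
    simp
  | insert x s hx ih =>
    obtain ⟨h1, h2, h3, h4⟩ := ih
    have e1 : ∀ v : ι → R, esymOn 1 (insert x s) v = esymOn 1 s v + v x := fun v => by
      rw [esymOn_insert 0 s v x hx, esymOn_zero, mul_one]
    have e2 := fun v : ι → R => esymOn_insert 1 s v x hx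
    have e3 := fun v : ι → R => esymOn_insert 2 s v x hx
    have e4 := fun v : ι → R => esymOn_insert 3 s v x hx
    norm_num only at e2 e3 e4
    simp only [e1, e2, e3, e4, h1, h2, h3, h4]
    refine ⟨?_, ?_, ?_, ?_⟩ <;> ring

theorem statement9 (n : ℕ) (hn : 4 ≤ n) :
    esym 4 (fun i => av n i - bv n i)
      = esym 4 (av n) + esym 4 (bv n)
        - esym 1 (av n) * esym 3 (bv n) - esym 1 (bv n) * esym 3 (av n)
        + esym 2 (av n) * esym 2 (bv n)
        - esym 1 (av n) * esym 1 (bv n) * esym 1 (fun i => av n i * bv n i)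
        + esym 1 (fun i => av n i * bv n i) * esym 2 (av n)
        + esym 1 (fun i => av n i * bv n i) * esym 2 (bv n)
        - esym 1 (av n) * esym 1 (fun i => av n i ^ 2 * bv n i)
        + esym 1 (av n) * esym 1 (fun i => av n i * bv n i ^ 2)
        + esym 1 (bv n) * esym 1 (fun i => av n i ^ 2 * bv n i)
        - esym 1 (bv n) * esym 1 (fun i => av n i * bv n i ^ 2)
        + esym 1 (fun i => av n i ^ 3 * bv n i)
        - esym 1 (fun i => av n i ^ 2 * bv n i ^ 2)
        + esym 1 (fun i => av n i * bv n i ^ 3)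
        + esym 2 (fun i => av n i * bv n i) := by
  exact (esymOn_all (av n) (bv n) Finset.univ).2.2.2
end
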